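/- Call a subset A of the 12 cube edges odd-regular if every point T_i lies on an odd number of edges of A (there are exactly 32 such subsets). The group G acts on such subsets componentwise. Then the number of G-orbits of odd-regular subsets is exactly 6; one of these orbits is that of the full set of all 12 cube edges (corresponding to B𝒪), and the remaining 5 orbits correspond to the dihedral f-tilings whose prototiles are the Möbius triangle and an isosceles triangle derived from B𝒪 by a-edge assignments. -/

import Mathlib

open Matrix

attribute [local instance] Classical.propDecidable

/-- `τ = (2√2+1)/7`. -/
noncomputable def tau : ℝ := (2 * Real.sqrt 2 + 1) / 7

/-- The eight cube points `T_1, …, T_8` (indexed by `Fin 8`, so `T 0 = T_1` etc.). -/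
noncomputable def T : Fin 8 → Fin 3 → ℝ :=
  ![tau • ![1, 1, 1], tau • ![-1, 1, 1], tau • ![-1, -1, 1], tau • ![1, -1, 1],
    tau • ![1, 1, -1], tau • ![-1, 1, -1], tau • ![-1, -1, -1], tau • ![1, -1, -1]]

/-- A `3×3` signed permutation matrix (element of the octahedral group `G`). -/
def IsSignedPerm (M : Matrix (Fin 3) (Fin 3) ℝ) : Prop :=
  Mᵀ * M = 1 ∧ (∀ i, ∃! j, M i j ≠ 0) ∧ (∀ j, ∃! i, M i j ≠ 0) ∧
    ∀ i j, M i j ≠ 0 → M i j = 1 ∨ M i j = -1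

/-- The 12 cube edges: unordered pairs `{T_i, T_k}` such that `T_i` and `T_k` differ
in exactly one coordinate. -/
noncomputable def cubeEdges : Finset (Sym2 (Fin 8)) :=
  Finset.univ.filter fun e => ∃ i k : Fin 8, e = s(i, k) ∧
    (Finset.univ.filter fun c : Fin 3 => T i c ≠ T k c).card = 1

/-- A subset `A` of the cube edges is odd-regular if every point `T_i` lies on an odd
number of edges of `A`. -/
noncomputable def IsOddRegular (A : Finset (Sym2 (Fin 8))) : Prop :=
  A ⊆ cubeEdges ∧ ∀ i : Fin 8, Odd (A.filter fun e => i ∈ e).card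

/-- `A'` is obtained from `A` by the componentwise action of some `σ ∈ G`. -/
noncomputable def oddRel (A A' : {A : Finset (Sym2 (Fin 8)) // IsOddRegular A}) : Prop :=
  ∃ σ : Matrix (Fin 3) (Fin 3) ℝ, IsSignedPerm σ ∧
    ∀ e' : Sym2 (Fin 8), e' ∈ A'.1 ↔
      ∃ e ∈ A.1, ∃ i k i' k' : Fin 8, e = s(i, k) ∧ e' = s(i', k') ∧
        σ.mulVec (T i) = T i' ∧ σ.mulVec (T k) = T k'

/-!
Colour each of the six faces of the cube black or white, and select the edges whose two faces have
the same colour. Of the three faces at a corner, either all three or exactly two share a colour, so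
three edges or one edge are selected there. Conversely, each odd-regular set arises in this way
from exactly two colourings, which are complementary; this gives `2 ^ 6 / 2 = 32` sets. A colouring
is determined up to signed permutations by the multiset of unordered colour pairs on the three
axes, and exchanging the two colours leaves six classes of such multisets.
-/

theorem exists_eq_comp_perm_iff_map_univ_eq {ι α : Type*} [Fintype ι] {f g : ι → α} :
    (∃ π : Equiv.Perm ι, f = g ∘ π) ↔ Finset.univ.val.map f = Finset.univ.val.map g := by
  classical
  constructor
  · rintro ⟨π, rfl⟩
    rw [← Multiset.map_map, Multiset.map_univ_val_equiv]
  · intro h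
    have card_fiber_eq (a : α) : Fintype.card {i // f i = a} = Fintype.card {i // g i = a} := by
      have := congrArg (Multiset.count a) h
      simpa [Multiset.count_map, Fintype.card_subtype, eq_comm, Finset.card_def] using this
    let e := Equiv.ofFiberEquiv fun a ↦ Fintype.equivOfCardEq (card_fiber_eq a)
    exact ⟨e, funext fun i ↦ (Equiv.ofFiberEquiv_map _ i).symm⟩

theorem card_quot_eq_card_range {α β γ : Type*} {f : α → β} (hf : f.Surjective)
    {r : β → β → Prop} {g : α → γ} (h : ∀ a b, r (f a) (f b) ↔ g a = g b) :
    Nat.card (Quot r) = Nat.card (Set.range g) := by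
  have f_section (b : β) : f (Function.surjInv hf b) = b := Function.surjInv_eq hf b
  have r_eq_ker : r = (Setoid.ker (g ∘ Function.surjInv hf)).r := by
    funext b b'
    refine propext ?_
    conv_lhs => rw [← f_section b, ← f_section b']
    exact h _ _
  have range_eq : Set.range (g ∘ Function.surjInv hf) = Set.range g := by
    refine (Set.range_comp_subset_range _ _).antisymm ?_
    rintro _ ⟨a, rfl⟩
    refine ⟨f a, (h _ _).1 ?_⟩
    rw [f_section]
    exact (h a a).2 rfl
  rw [r_eq_ker, ← range_eq]
  exact Nat.card_congr (Setoid.quotientKerEquivRange _)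

section Hypercube

variable {ι : Type*}

/-- The signed permutation of coordinates `x ↦ (c ↦ s c * x (π c))`, acting on sign vectors. -/
def signedPerm (s : ι → ℤˣ) (π : Equiv.Perm ι) : Equiv.Perm (ι → ℤˣ) :=
  (π.symm.arrowCongr (Equiv.refl ℤˣ)).trans (Equiv.mulLeft s)

theorem signedPerm_apply (s : ι → ℤˣ) (π : Equiv.Perm ι) (x : ι → ℤˣ) (c : ι) :
    signedPerm s π x c = s c * x (π c) :=
  rfl

variable [DecidableEq ι]

/-- The neighbour of the sign vector `x` across coordinate `c`, where sign vectors `ι → ℤˣ` stand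
for the corners of the cube `[-1, 1]^ι`. -/
def flipAt (x : ι → ℤˣ) (c : ι) : ι → ℤˣ :=
  Function.update x c (-x c)

/-- The edge of the cube `[-1, 1]^ι` that passes through the corner `x` in direction `c`. -/
def dirEdge (x : ι → ℤˣ) (c : ι) : Sym2 (ι → ℤˣ) :=
  s(x, flipAt x c)

theorem flipAt_same (x : ι → ℤˣ) (c : ι) : flipAt x c c = -x c :=
  Function.update_self ..

theorem flipAt_of_ne {b c : ι} (h : b ≠ c) (x : ι → ℤˣ) : flipAt x c b = x b :=
  Function.update_of_ne h ..

theorem eq_or_eq_flipAt_iff {x y : ι → ℤˣ} {c : ι} :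
    y = x ∨ y = flipAt x c ↔ ∀ b ≠ c, y b = x b := by
  constructor
  · rintro (rfl | rfl) b hb
    exacts [rfl, flipAt_of_ne hb x]
  · intro h
    refine (eq_or_ne (y c) (x c)).imp (fun hc ↦ ?_) fun hc ↦ ?_
    · funext b
      obtain rfl | hb := eq_or_ne b c
      exacts [hc, h b hb]
    · funext b
      obtain rfl | hb := eq_or_ne b c
      exacts [(Int.units_ne_iff_eq_neg.1 hc).trans (flipAt_same x b).symm,
        (h b hb).trans (flipAt_of_ne hb x).symm]

theorem flipAt_flipAt (x : ι → ℤˣ) (c : ι) : flipAt (flipAt x c) c = x := by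
  simp [flipAt]

theorem flipAt_injective (x : ι → ℤˣ) : Function.Injective (flipAt x) := by
  intro c d h
  by_contra hcd
  have hc : flipAt x c c = x c := (congrFun h c).trans (flipAt_of_ne hcd x)
  exact units_ne_neg_self (x c) (hc.symm.trans (flipAt_same x c))

theorem mem_dirEdge_iff {x y : ι → ℤˣ} {c : ι} : y ∈ dirEdge x c ↔ ∀ b ≠ c, y b = x b := by
  rw [dirEdge, Sym2.mem_iff, eq_or_eq_flipAt_iff]

theorem dirEdge_eq_of_mem {x y : ι → ℤˣ} {c : ι} (h : y ∈ dirEdge x c) :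
    dirEdge y c = dirEdge x c := by
  obtain rfl | rfl := Sym2.mem_iff.1 h
  · rfl
  · rw [dirEdge, flipAt_flipAt, Sym2.eq_swap, dirEdge]

theorem dirEdge_injective (x : ι → ℤˣ) : Function.Injective (dirEdge x) := fun _ _ h ↦
  flipAt_injective x (Sym2.congr_right.1 h)

theorem dirEdge_eq_iff {x y : ι → ℤˣ} {c d : ι} :
    dirEdge x c = dirEdge y d ↔ c = d ∧ ∀ b ≠ c, x b = y b := by
  constructor
  · intro h
    have hx : x ∈ dirEdge y d := h ▸ Sym2.mem_mk_left ..
    obtain rfl := dirEdge_injective x (h.trans (dirEdge_eq_of_mem hx).symm)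
    exact ⟨rfl, mem_dirEdge_iff.1 hx⟩
  · rintro ⟨rfl, h⟩
    exact dirEdge_eq_of_mem (mem_dirEdge_iff.2 h)

theorem hammingDist_eq_one_iff_exists_flipAt [Fintype ι] {x y : ι → ℤˣ} :
    hammingDist x y = 1 ↔ ∃ c, y = flipAt x c := by
  simp only [hammingDist, Finset.card_eq_one]
  refine exists_congr fun c ↦ ?_
  simp only [Finset.ext_iff, Finset.mem_filter_univ, Finset.mem_singleton]
  constructor
  · intro h
    refine (eq_or_eq_flipAt_iff.2 fun b hb ↦ ?_).resolve_left fun hyx ↦ (h c).2 rfl ?_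
    · exact (not_not.1 ((h b).not.2 hb)).symm
    · rw [hyx]
  · rintro rfl b
    obtain rfl | hb := eq_or_ne b c
    · simpa only [flipAt_same, iff_true] using units_ne_neg_self (x b)
    · simp only [flipAt_of_ne hb, ne_eq, not_true_eq_false, hb]

theorem map_signedPerm_dirEdge (s : ι → ℤˣ) (π : Equiv.Perm ι) (x : ι → ℤˣ) (c : ι) :
    (dirEdge x (π c)).map (signedPerm s π) = dirEdge (signedPerm s π x) c := by
  refine congrArg (Sym2.mk _) (funext fun b ↦ ?_)
  obtain rfl | hb := eq_or_ne b c
  · simp only [signedPerm_apply, flipAt_same, mul_neg]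
  · simp only [signedPerm_apply, flipAt_of_ne hb, flipAt_of_ne (π.injective.ne hb)]

end Hypercube

/-- A black-and-white colouring of the facets of the cube `[-1, 1]^ι`: the facet on which
coordinate `c` equals `ε` has colour `κ c ε`. -/
abbrev FaceColouring (ι : Type*) := ι → ℤˣ → Bool

namespace FaceColouring

variable {ι : Type*}

/-- The edge through the corner `x` in direction `c` is monochromatic if all the facets containing
it have the same colour. -/
def IsMono (κ : FaceColouring ι) (x : ι → ℤˣ) (c : ι) : Prop :=
  ∀ a b, a ≠ c → b ≠ c → κ a (x a) = κ b (x b)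

/-- The image of the colouring `κ` under the symmetry `signedPerm s π` of the cube. -/
def transform (s : ι → ℤˣ) (π : Equiv.Perm ι) (κ : FaceColouring ι) : FaceColouring ι :=
  fun c ε ↦ κ (π c) (s c * ε)

/-- The unordered pair of colours of the two opposite facets orthogonal to the axis `c`. -/
def axisColours (κ : FaceColouring ι) (c : ι) : Sym2 Bool :=
  s(κ c 1, κ c (-1))

/-- The multiset of colour pairs of the axes, a complete invariant of colourings under signed
permutations. -/
def axisProfile [Fintype ι] (κ : FaceColouring ι) : Multiset (Sym2 Bool) :=
  Finset.univ.val.map κ.axisColours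

theorem isMono_congr (κ : FaceColouring ι) {x y : ι → ℤˣ} {c : ι} (h : ∀ b ≠ c, x b = y b) :
    κ.IsMono x c ↔ κ.IsMono y c :=
  forall₄_congr fun a b ha hb ↦ by rw [h a ha, h b hb]

theorem isMono_compl (κ : FaceColouring ι) (x : ι → ℤˣ) (c : ι) : κᶜ.IsMono x c ↔ κ.IsMono x c :=
  forall₄_congr fun _ _ _ _ ↦ Bool.not_inj_iff

theorem isMono_transform (s : ι → ℤˣ) (π : Equiv.Perm ι) (κ : FaceColouring ι) (x : ι → ℤˣ)
    (c : ι) : (κ.transform s π).IsMono (signedPerm s π x) c ↔ κ.IsMono x (π c) := by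
  have colour_eq (a : ι) : κ.transform s π a (signedPerm s π x a) = κ (π a) (x (π a)) := by
    rw [transform, signedPerm_apply, ← mul_assoc, Int.units_mul_self, one_mul]
  simp only [IsMono, colour_eq]
  exact π.forall_congr fun a ↦ π.forall_congr fun b ↦ by simp only [π.injective.ne_iff]

theorem axisColours_eq_iff {κ κ' : FaceColouring ι} {c d : ι} :
    κ'.axisColours c = κ.axisColours d ↔ ∃ t : ℤˣ, ∀ ε, κ' c ε = κ d (t * ε) := by
  have forall_units (p : ℤˣ → Prop) : (∀ ε, p ε) ↔ p 1 ∧ p (-1) := by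
    refine ⟨fun h ↦ ⟨h 1, h (-1)⟩, fun h ε ↦ ?_⟩
    obtain rfl | rfl := Int.units_eq_one_or ε
    exacts [h.1, h.2]
  have exists_units (p : ℤˣ → Prop) : (∃ t, p t) ↔ p 1 ∨ p (-1) := by
    refine ⟨fun ⟨t, ht⟩ ↦ ?_, fun h ↦ h.elim (⟨1, ·⟩) (⟨-1, ·⟩)⟩
    obtain rfl | rfl := Int.units_eq_one_or t
    exacts [.inl ht, .inr ht]
  simp only [axisColours, Sym2.eq_iff, exists_units, forall_units, one_mul, mul_one, neg_mul,
    neg_neg]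

theorem exists_transform_eq_iff [Fintype ι] {κ κ' : FaceColouring ι} :
    (∃ s π, κ' = κ.transform s π) ↔ κ'.axisProfile = κ.axisProfile := by
  rw [axisProfile, axisProfile, ← exists_eq_comp_perm_iff_map_univ_eq, exists_comm]
  refine exists_congr fun π ↦ ?_
  simp only [funext_iff, transform, Function.comp_apply, axisColours_eq_iff, Classical.skolem]

/-- The axis profile up to exchanging the two colours. -/
def unorderedProfile [Fintype ι] (κ : FaceColouring ι) : Sym2 (Multiset (Sym2 Bool)) :=
  s(κ.axisProfile, κᶜ.axisProfile)

theorem axisProfile_compl [Fintype ι] (κ : FaceColouring ι) :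
    κᶜ.axisProfile = κ.axisProfile.map (Sym2.map not) := by
  rw [axisProfile, axisProfile, Multiset.map_map]
  rfl

theorem unorderedProfile_eq_iff [Fintype ι] {κ κ' : FaceColouring ι} :
    κ.unorderedProfile = κ'.unorderedProfile ↔
      ∃ s π, κ' = κ.transform s π ∨ κ' = (κ.transform s π)ᶜ := by
  have eq_compl_iff (μ : FaceColouring ι) : κ' = μᶜ ↔ κ'ᶜ = μ := eq_compl_comm.trans eq_comm
  simp only [eq_compl_iff, exists_or, exists_transform_eq_iff, unorderedProfile, Sym2.eq_iff]
  constructor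
  · exact Or.imp (fun h ↦ h.1.symm) fun h ↦ h.1.symm
  · rintro (h | h)
    · exact .inl ⟨h.symm, by rw [axisProfile_compl, axisProfile_compl, h]⟩
    · refine .inr ⟨h.symm, ?_⟩
      rw [axisProfile_compl κ, ← h, ← axisProfile_compl, compl_compl]

/-- In terms of the numbers of all-white and all-black axes, the six values are the unordered pairs
of naturals with sum at most `3`. -/
theorem card_range_unorderedProfile :
    Nat.card (Set.range (unorderedProfile (ι := Fin 3))) = 6 := by
  rw [Nat.card_eq_fintype_card]
  decide +kernel

theorem isMono_iff_eq {κ : FaceColouring (Fin 3)} {x : Fin 3 → ℤˣ} {a b c : Fin 3} (hab : a ≠ b)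
    (hac : a ≠ c) (hbc : b ≠ c) : κ.IsMono x c ↔ κ a (x a) = κ b (x b) := by
  refine ⟨fun h ↦ h a b hac hbc, fun h ↦ ?_⟩
  have colour_eq (d : Fin 3) (hd : d ≠ c) : κ d (x d) = κ a (x a) := by
    obtain rfl | rfl : d = a ∨ d = b := by omega
    exacts [rfl, h.symm]
  exact fun d e hd he ↦ (colour_eq d hd).trans (colour_eq e he).symm

theorem odd_card_isMono (κ : FaceColouring (Fin 3)) (x : Fin 3 → ℤˣ) :
    Odd (Finset.univ.filter fun c ↦ κ.IsMono x c).card := by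
  have odd_card (k : Fin 3 → Bool) :
      Odd (Finset.univ.filter fun c : Fin 3 ↦ ∀ a b, a ≠ c → b ≠ c → k a = k b).card := by
    decide +revert
  convert odd_card fun a ↦ κ a (x a)
  exact Iff.rfl

theorem forall_isMono_iff {κ κ' : FaceColouring (Fin 3)} :
    (∀ x c, κ'.IsMono x c ↔ κ.IsMono x c) ↔ κ' = κ ∨ κ' = κᶜ := by
  have eq_iff_eq_swap : ∀ p q r s : Bool, (p = q ↔ r = s) → (p = r ↔ q = s) := by decide
  constructor
  · intro h
    have agree_iff_of_ne {a b : Fin 3} (hab : a ≠ b) (ε δ : ℤˣ) :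
        κ' a ε = κ a ε ↔ κ' b δ = κ b δ := by
      obtain ⟨c, hac, hbc⟩ : ∃ c, a ≠ c ∧ b ≠ c := by decide +revert
      have mono_iff := h (Function.update (fun _ ↦ δ) a ε) c
      rw [isMono_iff_eq hab hac hbc, isMono_iff_eq hab hac hbc, Function.update_self,
        Function.update_of_ne hab.symm] at mono_iff
      exact eq_iff_eq_swap _ _ _ _ mono_iff
    have agree_iff (a : Fin 3) (ε : ℤˣ) : κ' a ε = κ a ε ↔ κ' 0 1 = κ 0 1 := by
      obtain ⟨b, hab, hb⟩ : ∃ b, a ≠ b ∧ b ≠ 0 := by decide +revert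
      exact (agree_iff_of_ne hab ε 1).trans (agree_iff_of_ne hb 1 1)
    refine (eq_or_ne (κ' 0 1) (κ 0 1)).imp (fun h₀ ↦ ?_) fun h₀ ↦ ?_
    · exact funext₂ fun a ε ↦ (agree_iff a ε).2 h₀
    · exact funext₂ fun a ε ↦ Bool.eq_not.2 (mt (agree_iff a ε).1 h₀)
  · rintro (rfl | rfl) x c
    exacts [Iff.rfl, isMono_compl κ x c]

end FaceColouring

section CubePoints

/-- The signs of the coordinates of the cube points, as a bijection between the indices of the
points and the sign vectors. -/
noncomputable def cubePointSigns : Fin 8 ≃ (Fin 3 → ℤˣ) :=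
  Equiv.ofBijective
    ![![1, 1, 1], ![-1, 1, 1], ![-1, -1, 1], ![1, -1, 1],
      ![1, 1, -1], ![-1, 1, -1], ![-1, -1, -1], ![1, -1, -1]]
    (by decide)

theorem tau_pos : 0 < tau := by
  unfold tau
  positivity

theorem T_apply (i : Fin 8) (c : Fin 3) : T i c = tau * (cubePointSigns i c : ℤ) := by
  fin_cases i <;> fin_cases c <;> simp [T, cubePointSigns]

theorem tau_mul_units_injective : Function.Injective fun ε : ℤˣ ↦ tau * ((ε : ℤ) : ℝ) := by
  intro ε δ h
  exact_mod_cast mul_left_cancel₀ tau_pos.ne' h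

theorem T_injective : Function.Injective T := by
  intro i k h
  refine cubePointSigns.injective (funext fun c ↦ tau_mul_units_injective ?_)
  simpa only [T_apply] using congrFun h c

theorem hammingDist_T (i k : Fin 8) :
    hammingDist (T i) (T k) = hammingDist (cubePointSigns i) (cubePointSigns k) := by
  rw [← hammingDist_comp (β := fun _ ↦ ℝ) (fun _ (ε : ℤˣ) ↦ tau * ((ε : ℤ) : ℝ))
    fun _ ↦ tau_mul_units_injective]
  simp only [← T_apply]

/-- `dirEdge x c` as an edge between indices of cube points. -/
noncomputable def cubeEdge (x : Fin 3 → ℤˣ) (c : Fin 3) : Sym2 (Fin 8) :=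
  (dirEdge x c).map cubePointSigns.symm

theorem cubeEdge_eq_iff {x y : Fin 3 → ℤˣ} {c d : Fin 3} :
    cubeEdge x c = cubeEdge y d ↔ c = d ∧ ∀ b ≠ c, x b = y b := by
  rw [cubeEdge, cubeEdge, (Sym2.map.injective cubePointSigns.symm.injective).eq_iff,
    dirEdge_eq_iff]

theorem cubeEdge_injective (x : Fin 3 → ℤˣ) : Function.Injective (cubeEdge x) :=
  fun _ _ h ↦ (cubeEdge_eq_iff.1 h).1

theorem mem_cubeEdge_iff {i : Fin 8} {x : Fin 3 → ℤˣ} {c : Fin 3} :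
    i ∈ cubeEdge x c ↔ ∀ b ≠ c, cubePointSigns i b = x b := by
  rw [← mem_dirEdge_iff, cubeEdge, Sym2.mem_map]
  simp only [Equiv.symm_apply_eq, exists_eq_right]

theorem mem_cubeEdges_iff {e : Sym2 (Fin 8)} : e ∈ cubeEdges ↔ ∃ x c, e = cubeEdge x c := by
  have mem_iff : e ∈ cubeEdges ↔ ∃ i k, e = s(i, k) ∧ hammingDist (T i) (T k) = 1 := by
    simp only [cubeEdges, Finset.mem_filter_univ, hammingDist]
  simp only [mem_iff, hammingDist_T, hammingDist_eq_one_iff_exists_flipAt]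
  constructor
  · rintro ⟨i, k, rfl, c, hk⟩
    refine ⟨cubePointSigns i, c, ?_⟩
    rw [cubeEdge, dirEdge, ← hk, Sym2.map_mk, Equiv.symm_apply_apply, Equiv.symm_apply_apply]
  · rintro ⟨x, c, rfl⟩
    refine ⟨cubePointSigns.symm x, cubePointSigns.symm (flipAt x c), rfl, c, ?_⟩
    rw [Equiv.apply_symm_apply, Equiv.apply_symm_apply]

theorem isOddRegular_iff {A : Finset (Sym2 (Fin 8))} :
    IsOddRegular A ↔
      A ⊆ cubeEdges ∧ ∀ x, Odd (Finset.univ.filter fun c ↦ cubeEdge x c ∈ A).card := by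
  refine and_congr_right fun hA ↦ ?_
  rw [cubePointSigns.forall_congr_left]
  refine forall_congr' fun x ↦ ?_
  have filter_mem_eq_image : A.filter (cubePointSigns.symm x ∈ ·) =
      (Finset.univ.filter fun c ↦ cubeEdge x c ∈ A).image (cubeEdge x) := by
    ext e
    simp only [Finset.mem_filter, Finset.mem_image, Finset.mem_univ, true_and]
    constructor
    · rintro ⟨he, hx⟩
      obtain ⟨y, c, rfl⟩ := mem_cubeEdges_iff.1 (hA he)
      rw [mem_cubeEdge_iff, Equiv.apply_symm_apply] at hx
      have hxy : cubeEdge x c = cubeEdge y c := cubeEdge_eq_iff.2 ⟨rfl, hx⟩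
      exact ⟨c, hxy ▸ he, hxy⟩
    · rintro ⟨c, hc, rfl⟩
      exact ⟨hc, mem_cubeEdge_iff.2 fun b _ ↦ by rw [Equiv.apply_symm_apply]⟩
  rw [filter_mem_eq_image, Finset.card_image_of_injective _ (cubeEdge_injective x)]

end CubePoints

section OddRegular

/-- The set of edges of the cube that are monochromatic for the colouring `κ` of its faces. -/
noncomputable def monoEdges (κ : FaceColouring (Fin 3)) : Finset (Sym2 (Fin 8)) :=
  {e | ∃ x c, e = cubeEdge x c ∧ κ.IsMono x c}

theorem cubeEdge_mem_monoEdges_iff {κ : FaceColouring (Fin 3)} {x : Fin 3 → ℤˣ} {c : Fin 3} :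
    cubeEdge x c ∈ monoEdges κ ↔ κ.IsMono x c := by
  rw [monoEdges, Finset.mem_filter_univ]
  constructor
  · rintro ⟨y, d, hedge, h⟩
    obtain ⟨rfl, hxy⟩ := cubeEdge_eq_iff.1 hedge
    exact (κ.isMono_congr hxy).2 h
  · exact fun h ↦ ⟨x, c, rfl, h⟩

theorem monoEdges_subset (κ : FaceColouring (Fin 3)) : monoEdges κ ⊆ cubeEdges := by
  intro e he
  obtain ⟨x, c, rfl, -⟩ := (Finset.mem_filter_univ e).1 he
  exact mem_cubeEdges_iff.2 ⟨x, c, rfl⟩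

theorem isOddRegular_monoEdges (κ : FaceColouring (Fin 3)) : IsOddRegular (monoEdges κ) := by
  refine isOddRegular_iff.2 ⟨monoEdges_subset κ, fun x ↦ ?_⟩
  simp only [cubeEdge_mem_monoEdges_iff]
  exact κ.odd_card_isMono x

theorem eq_of_forall_cubeEdge_mem_iff {A B : Finset (Sym2 (Fin 8))} (hA : A ⊆ cubeEdges)
    (hB : B ⊆ cubeEdges) (h : ∀ x c, cubeEdge x c ∈ A ↔ cubeEdge x c ∈ B) : A = B := by
  ext e
  by_cases he : e ∈ cubeEdges
  · obtain ⟨x, c, rfl⟩ := mem_cubeEdges_iff.1 he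
    exact h x c
  · exact iff_of_false (mt (@hA e) he) (mt (@hB e) he)

theorem monoEdges_eq_iff {κ κ' : FaceColouring (Fin 3)} :
    monoEdges κ' = monoEdges κ ↔ κ' = κ ∨ κ' = κᶜ := by
  rw [← FaceColouring.forall_isMono_iff]
  simp only [← cubeEdge_mem_monoEdges_iff]
  exact ⟨fun h x c ↦ by rw [h],
    eq_of_forall_cubeEdge_mem_iff (monoEdges_subset κ') (monoEdges_subset κ)⟩

theorem monoEdges_const (b : Bool) : monoEdges (fun _ _ ↦ b) = cubeEdges :=
  eq_of_forall_cubeEdge_mem_iff (monoEdges_subset _) subset_rfl fun x c ↦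
    iff_of_true (cubeEdge_mem_monoEdges_iff.2 fun _ _ _ _ ↦ rfl) (mem_cubeEdges_iff.2 ⟨x, c, rfl⟩)

theorem odd_card_filter_iff {p : Fin 3 → Prop} [DecidablePred p] {a b c : Fin 3} (hab : a ≠ b)
    (hac : a ≠ c) (hbc : b ≠ c) : Odd (Finset.univ.filter p).card ↔ (p c ↔ (p a ↔ p b)) := by
  have univ_eq : (Finset.univ : Finset (Fin 3)) = {a, b, c} := by decide +revert
  rw [univ_eq, Finset.card_filter, Finset.sum_insert (by simp [hab, hac]),
    Finset.sum_insert (by simpa using hbc), Finset.sum_singleton]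
  by_cases ha : p a <;> by_cases hb : p b <;> by_cases hc : p c <;> simp [ha, hb, hc, Nat.odd_iff]

namespace IsOddRegular

variable {A B : Finset (Sym2 (Fin 8))}

theorem cubeEdge_mem_iff (hA : IsOddRegular A) (x : Fin 3 → ℤˣ) {a b c : Fin 3} (hab : a ≠ b)
    (hac : a ≠ c) (hbc : b ≠ c) :
    cubeEdge x c ∈ A ↔ (cubeEdge x a ∈ A ↔ cubeEdge x b ∈ A) :=
  (odd_card_filter_iff hab hac hbc).1 ((isOddRegular_iff.1 hA).2 x)

/-- The five edges in the hypotheses are the complement of a spanning tree of the cube. -/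
theorem eq_of_cubeEdge_mem_iff (hA : IsOddRegular A) (hB : IsOddRegular B)
    (h₁ : ∀ x, x 0 = 1 → (cubeEdge x 1 ∈ A ↔ cubeEdge x 1 ∈ B))
    (h₂ : ∀ x, x 0 = 1 ∨ x 1 = 1 → (cubeEdge x 2 ∈ A ↔ cubeEdge x 2 ∈ B)) : A = B := by
  have third_iff (x : Fin 3 → ℤˣ) {a b c : Fin 3} (hab : a ≠ b) (hac : a ≠ c) (hbc : b ≠ c)
      (ha : cubeEdge x a ∈ A ↔ cubeEdge x a ∈ B) (hb : cubeEdge x b ∈ A ↔ cubeEdge x b ∈ B) :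
      cubeEdge x c ∈ A ↔ cubeEdge x c ∈ B := by
    rw [hA.cubeEdge_mem_iff x hab hac hbc, hB.cubeEdge_mem_iff x hab hac hbc, ha, hb]
  have cubeEdge_update (x : Fin 3 → ℤˣ) (c : Fin 3) :
      cubeEdge (Function.update x c 1) c = cubeEdge x c :=
    cubeEdge_eq_iff.2 ⟨rfl, fun b hb ↦ Function.update_of_ne hb 1 x⟩
  have direction_zero (x : Fin 3 → ℤˣ) : cubeEdge x 0 ∈ A ↔ cubeEdge x 0 ∈ B := by
    rw [← cubeEdge_update]
    exact third_iff _ (a := 1) (b := 2) (by decide) (by decide) (by decide)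
      (h₁ _ (Function.update_self ..)) (h₂ _ (.inl (Function.update_self ..)))
  have direction_one (x : Fin 3 → ℤˣ) : cubeEdge x 1 ∈ A ↔ cubeEdge x 1 ∈ B := by
    rw [← cubeEdge_update]
    exact third_iff _ (a := 0) (b := 2) (by decide) (by decide) (by decide)
      (direction_zero _) (h₂ _ (.inr (Function.update_self ..)))
  have direction_two (x : Fin 3 → ℤˣ) : cubeEdge x 2 ∈ A ↔ cubeEdge x 2 ∈ B :=
    third_iff x (a := 0) (b := 1) (by decide) (by decide) (by decide)
      (direction_zero x) (direction_one x)
  refine eq_of_forall_cubeEdge_mem_iff hA.1 hB.1 fun x c ↦ ?_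
  fin_cases c
  exacts [direction_zero x, direction_one x, direction_two x]

theorem exists_monoEdges_eq (hA : IsOddRegular A) :
    ∃ κ : FaceColouring (Fin 3), κ 0 1 = true ∧ monoEdges κ = A := by
  let κ : FaceColouring (Fin 3) :=
    ![fun ε ↦ decide (cubeEdge ![ε, 1, 1] 2 ∈ A ↔ cubeEdge ![1, 1, 1] 2 ∈ A),
      fun ε ↦ decide (cubeEdge ![1, ε, 1] 2 ∈ A), fun ε ↦ decide (cubeEdge ![1, 1, ε] 1 ∈ A)]
  have white : κ 0 1 = true := decide_eq_true Iff.rfl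
  refine ⟨κ, white, (isOddRegular_monoEdges κ).eq_of_cubeEdge_mem_iff hA (fun x hx ↦ ?_)
    fun x hx ↦ ?_⟩
  · have edge_eq : cubeEdge x 1 = cubeEdge ![1, 1, x 2] 1 := cubeEdge_eq_iff.2 ⟨rfl, by
      simp [Fin.forall_fin_succ, hx]⟩
    rw [cubeEdge_mem_monoEdges_iff, FaceColouring.isMono_iff_eq (a := 0) (b := 2) (by decide)
      (by decide) (by decide), hx, white, edge_eq, eq_comm]
    exact decide_eq_true_iff
  · have edge_eq : cubeEdge x 2 = cubeEdge ![x 0, x 1, 1] 2 := cubeEdge_eq_iff.2 ⟨rfl, by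
      simp [Fin.forall_fin_succ]⟩
    rw [cubeEdge_mem_monoEdges_iff, FaceColouring.isMono_iff_eq (a := 0) (b := 1) (by decide)
      (by decide) (by decide), edge_eq]
    obtain hx | hx := hx
    · rw [hx, white, eq_comm]
      exact decide_eq_true_iff
    · rw [hx]
      exact decide_eq_decide.trans (by tauto)

end IsOddRegular

theorem card_isOddRegular : Nat.card {A // IsOddRegular A} = 32 := by
  let f (κ : {κ : FaceColouring (Fin 3) // κ 0 1 = true}) : {A // IsOddRegular A} :=
    ⟨monoEdges κ, isOddRegular_monoEdges κ⟩
  have f_bijective : f.Bijective := by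
    constructor
    · rintro ⟨κ, hκ⟩ ⟨κ', hκ'⟩ h
      obtain rfl | rfl := monoEdges_eq_iff.1 (congrArg Subtype.val h)
      · rfl
      · simp [hκ'] at hκ
    · rintro ⟨A, hA⟩
      obtain ⟨κ, hκ, rfl⟩ := hA.exists_monoEdges_eq
      exact ⟨⟨κ, hκ⟩, rfl⟩
  rw [← Nat.card_eq_of_bijective f f_bijective, Nat.card_eq_fintype_card]
  decide +kernel

end OddRegular

section SignedPermMatrix

variable {ι : Type*} [Fintype ι] [DecidableEq ι]

/-- The matrix of `signedPerm s π`. -/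
def signedPermMatrix (s : ι → ℤˣ) (π : Equiv.Perm ι) : Matrix ι ι ℝ :=
  diagonal (fun c ↦ ((s c : ℤ) : ℝ)) * π.permMatrix ℝ

theorem signedPermMatrix_apply (s : ι → ℤˣ) (π : Equiv.Perm ι) (i j : ι) :
    signedPermMatrix s π i j = if π i = j then ((s i : ℤ) : ℝ) else 0 := by
  rw [signedPermMatrix, diagonal_mul, Equiv.Perm.permMatrix, PEquiv.toMatrix_apply]
  simp

theorem signedPermMatrix_mulVec (s : ι → ℤˣ) (π : Equiv.Perm ι) (v : ι → ℝ) (c : ι) :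
    (signedPermMatrix s π).mulVec v c = (s c : ℤ) * v (π c) := by
  rw [signedPermMatrix, ← mulVec_mulVec, permMatrix_mulVec, mulVec_diagonal, Function.comp_apply]

theorem transpose_signedPermMatrix_mul_self (s : ι → ℤˣ) (π : Equiv.Perm ι) :
    (signedPermMatrix s π)ᵀ * signedPermMatrix s π = 1 := by
  rw [mul_eq_one_comm, signedPermMatrix, transpose_mul, diagonal_transpose, Matrix.mul_assoc,
    ← Matrix.mul_assoc (π.permMatrix ℝ), transpose_permMatrix, ← permMatrix_mul, inv_mul_cancel,
    permMatrix_one, Matrix.one_mul, diagonal_mul_diagonal, ← diagonal_one]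
  exact congrArg diagonal (funext fun c ↦ by exact_mod_cast Int.units_coe_mul_self (s c))

theorem signedPermMatrix_apply_ne_zero_iff (s : ι → ℤˣ) (π : Equiv.Perm ι) (i j : ι) :
    signedPermMatrix s π i j ≠ 0 ↔ π i = j := by
  simp [signedPermMatrix_apply]

theorem isSignedPerm_signedPermMatrix (s : Fin 3 → ℤˣ) (π : Equiv.Perm (Fin 3)) :
    IsSignedPerm (signedPermMatrix s π) := by
  simp only [IsSignedPerm, signedPermMatrix_apply_ne_zero_iff]
  refine ⟨transpose_signedPermMatrix_mul_self s π, fun i ↦ existsUnique_eq',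
    fun j ↦ π.bijective.existsUnique j, ?_⟩
  rintro i j rfl
  rw [signedPermMatrix_apply, if_pos rfl]
  exact (Int.units_eq_one_or (s i)).imp (by simp [·]) (by simp [·])

theorem IsSignedPerm.exists_eq_signedPermMatrix {M : Matrix (Fin 3) (Fin 3) ℝ}
    (hM : IsSignedPerm M) : ∃ s π, M = signedPermMatrix s π := by
  obtain ⟨-, hrow, hcol, hval⟩ := hM
  choose f hf hf_unique using hrow
  have f_injective : f.Injective := fun i k hik ↦ (hcol (f i)).unique (hf i) (hik ▸ hf k)
  have exists_sign (i : Fin 3) : ∃ ε : ℤˣ, M i (f i) = (ε : ℤ) :=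
    (hval i (f i) (hf i)).elim (⟨1, by simp [·]⟩) (⟨-1, by simp [·]⟩)
  choose s hs using exists_sign
  refine ⟨s, Equiv.ofBijective f (Finite.injective_iff_bijective.1 f_injective), ?_⟩
  ext i j
  rw [signedPermMatrix_apply, Equiv.ofBijective_apply]
  split_ifs with hij
  · rw [← hij, hs]
  · exact not_not.1 fun h ↦ hij (hf_unique i j h).symm

theorem signedPermMatrix_mulVec_T (s : Fin 3 → ℤˣ) (π : Equiv.Perm (Fin 3)) (i : Fin 8) :
    (signedPermMatrix s π).mulVec (T i) =
      T (cubePointSigns.symm (signedPerm s π (cubePointSigns i))) := by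
  ext c
  rw [signedPermMatrix_mulVec, T_apply, T_apply, Equiv.apply_symm_apply, signedPerm_apply]
  push_cast
  ring

end SignedPermMatrix

section Orbits

theorem map_conj_signedPerm_cubeEdge (s : Fin 3 → ℤˣ) (π : Equiv.Perm (Fin 3)) (x : Fin 3 → ℤˣ)
    (c : Fin 3) :
    (cubeEdge x (π c)).map (cubePointSigns.symm ∘ signedPerm s π ∘ cubePointSigns) =
      cubeEdge (signedPerm s π x) c := by
  rw [cubeEdge, cubeEdge, ← map_signedPerm_dirEdge, Sym2.map_map, Sym2.map_map]
  congr 1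
  funext y
  simp

theorem exists_signedPermMatrix_image_iff {A : Finset (Sym2 (Fin 8))} (s : Fin 3 → ℤˣ)
    (π : Equiv.Perm (Fin 3)) (e' : Sym2 (Fin 8)) :
    (∃ e ∈ A, ∃ i k i' k' : Fin 8, e = s(i, k) ∧ e' = s(i', k') ∧
      (signedPermMatrix s π).mulVec (T i) = T i' ∧ (signedPermMatrix s π).mulVec (T k) = T k') ↔
      ∃ e ∈ A, e' = e.map (cubePointSigns.symm ∘ signedPerm s π ∘ cubePointSigns) := by
  simp only [signedPermMatrix_mulVec_T, T_injective.eq_iff]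
  refine exists_congr fun e ↦ and_congr_right fun _ ↦ ?_
  constructor
  · rintro ⟨i, k, _, _, rfl, rfl, rfl, rfl⟩
    rfl
  · rintro rfl
    induction e using Sym2.ind with
    | _ i k => exact ⟨i, k, _, _, rfl, rfl, rfl, rfl⟩

theorem oddRel_iff {A A' : {A // IsOddRegular A}} :
    oddRel A A' ↔
      ∃ s π, ∀ x c, cubeEdge (signedPerm s π x) c ∈ A'.1 ↔ cubeEdge x (π c) ∈ A.1 := by
  have oddRel_iff_image : oddRel A A' ↔ ∃ s π, ∀ e', e' ∈ A'.1 ↔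
      ∃ e ∈ A.1, e' = e.map (cubePointSigns.symm ∘ signedPerm s π ∘ cubePointSigns) := by
    simp only [← exists_signedPermMatrix_image_iff]
    constructor
    · rintro ⟨M, hM, h⟩
      obtain ⟨s, π, rfl⟩ := hM.exists_eq_signedPermMatrix
      exact ⟨s, π, h⟩
    · rintro ⟨s, π, h⟩
      exact ⟨_, isSignedPerm_signedPermMatrix s π, h⟩
  rw [oddRel_iff_image]
  refine exists₂_congr fun s π ↦ ?_
  constructor
  · intro h x c
    have map_injective := Sym2.map.injective (cubePointSigns.symm.injective.comp
      ((signedPerm s π).injective.comp cubePointSigns.injective))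
    simp only [h, ← map_conj_signedPerm_cubeEdge, map_injective.eq_iff, exists_eq_right']
  · intro h e'
    constructor
    · intro he'
      obtain ⟨y, c, rfl⟩ := mem_cubeEdges_iff.1 (A'.2.1 he')
      obtain ⟨x, rfl⟩ := (signedPerm s π).surjective y
      exact ⟨_, (h x c).1 he', (map_conj_signedPerm_cubeEdge s π x c).symm⟩
    · rintro ⟨e, he, rfl⟩
      obtain ⟨x, d, rfl⟩ := mem_cubeEdges_iff.1 (A.2.1 he)
      obtain ⟨c, rfl⟩ := π.surjective d
      rw [map_conj_signedPerm_cubeEdge]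
      exact (h x c).2 he

theorem oddRel_monoEdges_iff {κ κ' : FaceColouring (Fin 3)} :
    oddRel ⟨monoEdges κ, isOddRegular_monoEdges κ⟩ ⟨monoEdges κ', isOddRegular_monoEdges κ'⟩ ↔
      κ.unorderedProfile = κ'.unorderedProfile := by
  rw [oddRel_iff, FaceColouring.unorderedProfile_eq_iff]
  refine exists₂_congr fun s π ↦ ?_
  rw [← FaceColouring.forall_isMono_iff, ← (signedPerm s π).forall_congr_right
    (q := fun x ↦ ∀ c, κ'.IsMono x c ↔ (κ.transform s π).IsMono x c)]
  simp only [cubeEdge_mem_monoEdges_iff, FaceColouring.isMono_transform]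

theorem card_quot_oddRel : Nat.card (Quot oddRel) = 6 := by
  let f (κ : FaceColouring (Fin 3)) : {A // IsOddRegular A} :=
    ⟨monoEdges κ, isOddRegular_monoEdges κ⟩
  have f_surjective : f.Surjective := by
    rintro ⟨A, hA⟩
    obtain ⟨κ, -, rfl⟩ := hA.exists_monoEdges_eq
    exact ⟨κ, rfl⟩
  rw [card_quot_eq_card_range f_surjective fun _ _ ↦ oddRel_monoEdges_iff,
    FaceColouring.card_range_unorderedProfile]

end Orbits

/-- There are exactly `32` odd-regular subsets of the 12 cube edges, falling into
exactly `6` `G`-orbits; the full set of cube edges is odd-regular (its orbit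
corresponds to `B𝒪`), and the remaining `5` orbits correspond to the dihedral
f-tilings with prototiles the Möbius triangle and an isosceles triangle derived from
`B𝒪` by `a`-edge assignments. -/
theorem stmt_8 :
    Nat.card {A : Finset (Sym2 (Fin 8)) // IsOddRegular A} = 32 ∧
    Nat.card (Quot oddRel) = 6 ∧
    IsOddRegular cubeEdges := by
  refine ⟨card_isOddRegular, card_quot_oddRel, ?_⟩
  rw [← monoEdges_const true]
  exact isOddRegular_monoEdges _
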